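/- Let A be a k × m integer matrix whose columns sum to the zero vector in Z^k (the strong column condition) and with k-determinantal d_k(A) = 1. Then for every ε > 0 there exists δ = δ(ε, A) > 0 such that for every sufficiently large finite abelian group G and every X ⊆ G with |X| ≥ ε|G|, the system Ax = 0 has at least δ·|G|^{m−k} solutions x ∈ X^m. (This follows from the removal lemma for abelian groups together with the ε|G| trivial solutions x = (x_0, ..., x_0), x_0 ∈ X.) -/

import Mathlib

open Finset

/-- The `k`-determinantal of a `k × m` integer matrix: the gcd of all its `k × k` minors. -/
noncomputable def detGcd {k m : ℕ} (A : Matrix (Fin k) (Fin m) ℤ) : ℕ :=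
  Finset.univ.gcd (fun f : Fin k ↪ Fin m => (A.submatrix id f).det.natAbs)

open Finset

namespace DHJ

/-- real indicator of a proposition -/
noncomputable def ind (p : Prop) : ℝ := by
  classical exact if p then 1 else 0

lemma ind_true {p : Prop} (h : p) : ind p = 1 := by simp [ind, h]
lemma ind_false {p : Prop} (h : ¬ p) : ind p = 0 := by simp [ind, h]
lemma ind_nonneg (p : Prop) : 0 ≤ ind p := by
  by_cases h : p <;> simp [ind, h]
lemma ind_le_one (p : Prop) : ind p ≤ 1 := by
  by_cases h : p <;> simp [ind, h]

/-- average of a real function on a finite type -/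
noncomputable def avg {Ω : Type} [Finite Ω] (f : Ω → ℝ) : ℝ :=
  letI := Fintype.ofFinite Ω
  (∑ x, f x) / (Nat.card Ω : ℝ)

section avg
variable {Ω Ω' : Type} [Finite Ω] [Finite Ω']

lemma avg_eq [Fintype Ω] (f : Ω → ℝ) : avg f = (∑ x, f x) / (Nat.card Ω : ℝ) := by
  unfold avg
  congr!

lemma avg_mono {f g : Ω → ℝ} (h : ∀ x, f x ≤ g x) : avg f ≤ avg g := by
  have := Fintype.ofFinite Ω
  rw [avg_eq, avg_eq]
  gcongr with x
  exact h x

lemma avg_const [Nonempty Ω] (c : ℝ) : avg (fun _ : Ω => c) = c := by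
  have := Fintype.ofFinite Ω
  rw [avg_eq]
  have : (Fintype.card Ω : ℝ) ≠ 0 := by exact_mod_cast Fintype.card_ne_zero
  simp

lemma avg_le [Nonempty Ω] {f : Ω → ℝ} {c : ℝ} (h : ∀ x, f x ≤ c) : avg f ≤ c := by
  rw [← avg_const (Ω := Ω) c]; exact avg_mono h

lemma le_avg [Nonempty Ω] {f : Ω → ℝ} {c : ℝ} (h : ∀ x, c ≤ f x) : c ≤ avg f := by
  rw [← avg_const (Ω := Ω) c]; exact avg_mono h

lemma avg_nonneg {f : Ω → ℝ} (h : ∀ x, 0 ≤ f x) : 0 ≤ avg f := by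
  have := Fintype.ofFinite Ω
  rw [avg_eq]
  have := Finset.sum_nonneg (fun x (_ : x ∈ (univ : Finset Ω)) => h x)
  positivity

lemma avg_add (f g : Ω → ℝ) : avg (fun x => f x + g x) = avg f + avg g := by
  have := Fintype.ofFinite Ω
  simp only [avg_eq, Finset.sum_add_distrib, add_div]

lemma avg_sub (f g : Ω → ℝ) : avg (fun x => f x - g x) = avg f - avg g := by
  have := Fintype.ofFinite Ω
  simp only [avg_eq, Finset.sum_sub_distrib, sub_div]

lemma avg_mul (c : ℝ) (f : Ω → ℝ) : avg (fun x => c * f x) = c * avg f := by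
  have := Fintype.ofFinite Ω
  simp only [avg_eq, ← Finset.mul_sum, mul_div_assoc]

lemma avg_sum {β : Type} (s : Finset β) (f : β → Ω → ℝ) :
    avg (fun x => ∑ b ∈ s, f b x) = ∑ b ∈ s, avg (f b) := by
  have := Fintype.ofFinite Ω
  simp only [avg_eq]
  rw [Finset.sum_comm, Finset.sum_div]

lemma avg_comm (f : Ω → Ω' → ℝ) :
    avg (fun x => avg (fun y => f x y)) = avg (fun y => avg (fun x => f x y)) := by
  have := Fintype.ofFinite Ω
  have := Fintype.ofFinite Ω'
  simp only [avg_eq, ← Finset.sum_div]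
  rw [Finset.sum_comm, div_div, div_div, mul_comm (Nat.card Ω : ℝ)]

lemma avg_prod (f : Ω × Ω' → ℝ) :
    avg f = avg (fun x => avg (fun y => f (x, y))) := by
  have := Fintype.ofFinite Ω
  have := Fintype.ofFinite Ω'
  simp only [avg_eq, ← Finset.sum_div]
  rw [Fintype.sum_prod_type, div_div, Nat.card_prod, Nat.cast_mul, mul_comm (Nat.card Ω : ℝ)]

lemma avg_equiv (e : Ω ≃ Ω') (f : Ω' → ℝ) : avg (fun x => f (e x)) = avg f := by
  have := Fintype.ofFinite Ω
  have := Fintype.ofFinite Ω'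
  simp only [avg_eq]
  rw [Nat.card_congr e, Equiv.sum_comp e f]

lemma exists_le_of_le_avg [Nonempty Ω] {f : Ω → ℝ} {c : ℝ} (h : c ≤ avg f) : ∃ x, c ≤ f x := by
  by_contra hc
  push Not at hc
  have := Fintype.ofFinite Ω
  have : avg f < c := by
    rw [avg_eq, div_lt_iff₀ (by exact_mod_cast Nat.card_pos)]
    calc ∑ x, f x < ∑ _x : Ω, c := Finset.sum_lt_sum_of_nonempty univ_nonempty (fun x _ => hc x)
      _ = _ := by simp [mul_comm]
  linarith

lemma avg_sumfn {ι₁ ι₂ α : Type} [Finite ι₁] [Finite ι₂] [Finite α] (f : (ι₁ ⊕ ι₂ → α) → ℝ) :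
    avg f = avg (fun x : ι₁ → α => avg (fun y : ι₂ → α => f (Sum.elim x y))) := by
  rw [← avg_equiv (Equiv.sumArrowEquivProdArrow ι₁ ι₂ α).symm, avg_prod]
  rfl

lemma avg_optfn {η α : Type} [Finite η] [Finite α] (f : (Option η → α) → ℝ) :
    avg f = avg (fun a : α => avg (fun y : η → α => f (fun o => o.elim a y))) := by
  rw [← avg_equiv (Equiv.piOptionEquivProd (β := fun _ : Option η => α)).symm, avg_prod]
  congr! with a y
  rename_i o
  cases o <;> rfl

lemma avg_unitfn {α : Type} [Finite α] (f : (Unit → α) → ℝ) :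
    avg f = avg (fun a : α => f (fun _ => a)) := by
  rw [← avg_equiv (Equiv.funUnique Unit α).symm]
  rfl

/-- the averaging plus pigeonhole argument -/
lemma pigeon {Λ : Type} [Fintype Λ] [Nonempty Ω] (f : Ω → ℝ) (hf : ∀ x, f x ≤ 1) {c : ℝ}
    (hc : 0 < c) (h : c ≤ avg f) (P : Λ → Ω → Prop) (hP : ∀ x, c / 2 ≤ f x → ∃ l, P l x) :
    ∃ l, c / (2 * Fintype.card Λ) ≤ avg (fun x => ind (P l x)) := by
  have h1 : avg f ≤ c / 2 + ∑ l, avg (fun x => ind (P l x)) := by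
    rw [← avg_sum, ← avg_const (Ω := Ω) (c / 2), ← avg_add]
    apply avg_mono
    intro x
    have hnn : ∀ l ∈ (univ : Finset Λ), 0 ≤ ind (P l x) := fun l _ => ind_nonneg _
    by_cases hx : c / 2 ≤ f x
    · obtain ⟨l, hl⟩ := hP x hx
      have := Finset.single_le_sum hnn (mem_univ l)
      rw [ind_true hl] at this
      linarith [hf x]
    · have := Finset.sum_nonneg hnn
      linarith
  by_contra hcon
  push Not at hcon
  rcases isEmpty_or_nonempty Λ with hE | hE
  · simp at h1; linarith
  have h2 : ∑ l, avg (fun x => ind (P l x)) < ∑ _l : Λ, c / (2 * Fintype.card Λ) :=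
    Finset.sum_lt_sum_of_nonempty univ_nonempty (fun l _ => hcon l)
  have h3 : ∑ _l : Λ, c / (2 * (Fintype.card Λ : ℝ)) = c / 2 := by
    have : (Fintype.card Λ : ℝ) ≠ 0 := by exact_mod_cast Fintype.card_ne_zero
    simp
    field_simp
  linarith

end avg

lemma fin_ind {P : ∀ (η : Type) [Finite η], Prop}
    (of_equiv : ∀ (η η' : Type) [Finite η] [Finite η'], η ≃ η' → P η → P η')
    (h_empty : P PEmpty) (h_option : ∀ (η : Type) [Finite η], P η → P (Option η))
    (η : Type) (hη : Finite η) : P η := by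
  have key : ∀ η : Type, Finite η → ∀ [Finite η], P η := by
    intro η hη
    refine Finite.induction_empty_option (P := fun η => ∀ [Finite η], P η) ?_ ?_ ?_ η
    · intro α β e h _
      have := Finite.of_equiv β e.symm
      exact of_equiv α β e h
    · exact h_empty
    · intro α _ h _
      exact h_option α h
  exact key η hη

/-- a template is proper if each of its wildcards occurs -/
def Proper {ι α η : Type} (t : ι → α ⊕ η) : Prop := ∀ e, ∃ i, t i = Sum.inr e

/-- substitution of `z` in the template `t` -/
def emb {ι α η : Type} (t : ι → α ⊕ η) (z : η → α) : ι → α := fun i => Sum.elim id z (t i)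

/-- the set contains a combinatorial line -/
def HasLine {ι α : Type} (D : Set (ι → α)) : Prop :=
  ∃ L : ι → Option α, (∃ i, L i = none) ∧ ∀ a, (fun i => (L i).getD a) ∈ D

/-- density Hales-Jewett property of the alphabet -/
def IsDHJ (α : Type) [Finite α] : Prop :=
  ∀ c : ℝ, 0 < c → ∃ (ι : Type) (_ : Finite ι), ∀ D : Set (ι → α),
    c ≤ avg (fun x => ind (x ∈ D)) → HasLine D

lemma split_one (T σ : Type) [Finite T] [Finite σ] [Nonempty T] [Nonempty σ] (R : ℕ) :
    ∃ (ι : Type) (_ : Finite ι), ∀ s : σ → T, Function.Injective s →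
      ∀ h : (ι → T) → ℝ, (∀ x, h x ≤ 1) → ∀ c : ℝ, 0 ≤ c →
      (∀ t : ι → T ⊕ Unit, Proper t →
        avg (fun a : σ => h (fun j => Sum.elim id (fun _ => s a) (t j))) ≤ c) →
      avg h ≤ c + (1 - (Nat.card σ : ℝ) / Nat.card T) ^ R := by
  induction R with
  | zero =>
    refine ⟨Empty, inferInstance, fun s hs h h1 c hc _ => ?_⟩
    have := avg_le h1
    simp; linarith
  | succ R ih =>
    obtain ⟨ι, _, ih⟩ := ih
    refine ⟨Unit ⊕ ι, inferInstance, fun s hs h h1 c hc ht => ?_⟩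
    set r := (1 - (Nat.card σ : ℝ) / Nat.card T) ^ R with hr
    rw [avg_sumfn, avg_unitfn]
    set H : T → ℝ := fun a => avg (fun y : ι → T => h (Sum.elim (fun _ => a) y)) with hH
    have hH1 : ∀ a, H a ≤ c + r := by
      intro a
      refine ih s hs _ (fun x => h1 _) c hc ?_
      intro t htp
      have := ht (Sum.elim (fun _ => Sum.inl a) t) (fun e => by
        obtain ⟨i, hi⟩ := htp e
        exact ⟨Sum.inr i, hi⟩)
      refine le_of_eq_of_le ?_ this
      congr! with b j
      rcases j with j | j <;> rfl
    have hH2 : avg (fun a : σ => H (s a)) ≤ c := by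
      rw [hH, avg_comm]
      apply avg_le
      intro y
      have := ht (Sum.elim (fun _ => Sum.inr ()) (fun i => Sum.inl (y i)))
        (fun e => ⟨Sum.inl (), rfl⟩)
      refine le_of_eq_of_le ?_ this
      congr! with b j
      rcases j with j | j <;> rfl
    have := Fintype.ofFinite T
    have := Fintype.ofFinite σ
    classical
    have h3 : ∑ a, (H a - (c + r)) ≤ ∑ a : σ, (H (s a) - (c + r)) := by
      rw [← Finset.sum_image (f := fun a => H a - (c + r)) (s := univ) (g := s)
        (fun a _ b _ hab => hs hab)]
      have : ∑ a, -(H a - (c + r)) ≥ ∑ a ∈ image s univ, -(H a - (c + r)) :=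
        Finset.sum_le_sum_of_subset_of_nonneg (subset_univ _)
          (fun a _ _ => by linarith [hH1 a])
      simp only [Finset.sum_neg_distrib] at this
      linarith
    have hT : (0 : ℝ) < Nat.card T := by exact_mod_cast Nat.card_pos
    have hS : (0 : ℝ) < Nat.card σ := by exact_mod_cast Nat.card_pos
    rw [avg_eq, div_le_iff₀ hS] at hH2
    simp only [Finset.sum_sub_distrib, Finset.sum_const, card_univ, nsmul_eq_mul] at h3
    rw [← Nat.card_eq_fintype_card, ← Nat.card_eq_fintype_card] at h3
    change avg H ≤ _
    rw [avg_eq, div_le_iff₀ hT, pow_succ, ← hr]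
    field_simp
    nlinarith

lemma Proper.comp_equiv {ι α η η' : Type} {t : ι → α ⊕ η} (ht : Proper t) (e : η ≃ η') :
    Proper (fun i => (t i).map id e) := by
  intro e'
  obtain ⟨i, hi⟩ := ht (e.symm e')
  exact ⟨i, by simp [hi]⟩

lemma Proper.option {ι₁ ι₂ α η : Type} {t₁ : ι₁ → α ⊕ Unit} {t₂ : ι₂ → α ⊕ η}
    (h₁ : Proper t₁) (h₂ : Proper t₂) :
    Proper (Sum.elim (fun i => (t₁ i).map id (fun _ => (none : Option η)))
      (fun i => (t₂ i).map id some)) := by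
  intro o
  cases o with
  | none =>
    obtain ⟨i, hi⟩ := h₁ ()
    exact ⟨Sum.inl i, by simp [hi]⟩
  | some e =>
    obtain ⟨i, hi⟩ := h₂ e
    exact ⟨Sum.inr i, by simp [hi]⟩

/-- finding many coordinates which are free over a part of the alphabet -/
lemma split (T σ : Type) [Finite T] [Finite σ] [Nonempty T] [Nonempty σ] (η : Type) [hη : Finite η] :
    ∀ ε : ℝ, 0 < ε →
    ∃ (ι : Type) (_ : Finite ι), ∀ s : σ → T, Function.Injective s →
      ∀ f : (ι → T) → ℝ, (∀ x, f x ≤ 1) → ∀ c : ℝ, 0 ≤ c → c + ε ≤ avg f →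
      ∃ t : ι → T ⊕ η, Proper t ∧
        c ≤ avg (fun z : η → σ => f (fun j => Sum.elim id (fun e => s (z e)) (t j))) := by
  induction η, hη using fin_ind with
  | of_equiv η η' e ih =>
    intro ε hε
    obtain ⟨ι, _, ih⟩ := ih ε hε
    refine ⟨ι, inferInstance, fun s hs f hf c hc hcf => ?_⟩
    obtain ⟨t, ht, h⟩ := ih s hs f hf c hc hcf
    refine ⟨_, ht.comp_equiv e, h.trans_eq ?_⟩
    rw [← avg_equiv (Equiv.arrowCongr e (Equiv.refl σ))]
    congr! with z j
    rcases t j with a | a <;> simp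
  | h_empty =>
    intro ε hε
    refine ⟨Empty, inferInstance, fun s hs f hf c hc hcf => ?_⟩
    refine ⟨Empty.elim, fun e => e.elim, ?_⟩
    apply le_avg
    intro z
    obtain ⟨x, hx⟩ := exists_le_of_le_avg hcf
    rw [Subsingleton.elim (fun j => _) x]
    linarith
  | h_option η ih =>
    intro ε hε
    obtain ⟨ι₂, _, ih⟩ := ih (ε / 2) (by positivity)
    have hT : (0 : ℝ) < Nat.card T := by exact_mod_cast Nat.card_pos
    have hS : (0 : ℝ) < Nat.card σ := by exact_mod_cast Nat.card_pos
    by_cases hle : Nat.card σ ≤ Nat.card T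
    swap
    · refine ⟨Empty, inferInstance, fun s hs => ?_⟩
      exact absurd (Nat.card_le_card_of_injective s hs) hle
    have hle' : (Nat.card σ : ℝ) / Nat.card T ≤ 1 := by
      rw [div_le_one hT]; exact_mod_cast hle
    have hpos : 0 < (Nat.card σ : ℝ) / Nat.card T := by positivity
    obtain ⟨R, hR⟩ := exists_pow_lt_of_lt_one (show 0 < ε / 2 by positivity)
      (show 1 - (Nat.card σ : ℝ) / Nat.card T < 1 by linarith)
    obtain ⟨ι₁, _, h₁⟩ := split_one T σ R
    refine ⟨ι₁ ⊕ ι₂, inferInstance, fun s hs f hf c hc hcf => ?_⟩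
    have key : ∃ t : ι₁ → T ⊕ Unit, Proper t ∧ c + ε / 2 ≤ avg (fun a : σ =>
        avg (fun y => f (Sum.elim (fun j => Sum.elim id (fun _ => s a) (t j)) y))) := by
      by_contra hcon
      push Not at hcon
      have := h₁ s hs (fun x => avg (fun y => f (Sum.elim x y)))
        (fun x => avg_le fun y => hf _) (c + ε / 2) (by positivity)
        (fun t ht => (hcon t ht).le)
      rw [← avg_sumfn] at this
      linarith
    obtain ⟨t₁, ht₁, hh⟩ := key
    rw [avg_comm] at hh
    obtain ⟨t₂, ht₂, hh₂⟩ := ih s hs _ (fun y => avg_le fun a => hf _) c hc hh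
    refine ⟨_, ht₁.option ht₂, hh₂.trans_eq ?_⟩
    rw [avg_optfn, avg_comm]
    congr! with a z j
    rcases j with j | j
    · simp only [Sum.elim_inl]
      rcases t₁ j with b | b <;> simp
    · simp only [Sum.elim_inr]
      rcases t₂ j with b | b <;> simp

/-- multidimensional version -/
lemma mdhj (κ : Type) [Finite κ] [Nonempty κ] (hκ : IsDHJ κ) (η : Type) [hη : Finite η] :
    ∀ c : ℝ, 0 < c → ∃ (ι : Type) (_ : Finite ι), ∀ D : Set (ι → κ),
      c ≤ avg (fun x => ind (x ∈ D)) → ∃ t : ι → κ ⊕ η, Proper t ∧ ∀ z, emb t z ∈ D := by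
  induction η, hη using fin_ind with
  | of_equiv η η' e ih =>
    intro c hc
    obtain ⟨ι, _, ih⟩ := ih c hc
    refine ⟨ι, inferInstance, fun D hD => ?_⟩
    obtain ⟨t, ht, h⟩ := ih D hD
    refine ⟨_, ht.comp_equiv e, fun z => ?_⟩
    convert h (z ∘ e) using 1
    ext j
    simp only [emb]
    rcases t j with a | a <;> simp
  | h_empty =>
    intro c hc
    refine ⟨Empty, inferInstance, fun D hD => ?_⟩
    refine ⟨Empty.elim, fun e => e.elim, fun z => ?_⟩
    obtain ⟨x, hx⟩ := exists_le_of_le_avg hD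
    rw [Subsingleton.elim (emb _ z) x]
    by_contra hx'
    rw [ind_false hx'] at hx
    linarith
  | h_option η ih =>
    intro c hc
    obtain ⟨ι₁, _, h₁⟩ := hκ (c / 2) (by positivity)
    have := Fintype.ofFinite (ι₁ → Option κ)
    obtain ⟨ι₂, _, ih⟩ := ih (c / (2 * Fintype.card (ι₁ → Option κ))) (by positivity)
    refine ⟨ι₁ ⊕ ι₂, inferInstance, fun D hD => ?_⟩
    rw [avg_sumfn, avg_comm] at hD
    obtain ⟨L, hL⟩ := pigeon _ (fun y => avg_le fun x => ind_le_one _) hc hD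
      (fun (L : ι₁ → Option κ) y => (∃ i, L i = none) ∧
        ∀ a, Sum.elim (fun i => (L i).getD a) y ∈ D)
      (fun y hy => h₁ {x | Sum.elim x y ∈ D} hy)
    obtain ⟨t₂, ht₂, hh₂⟩ := ih {y | (∃ i, L i = none) ∧
        ∀ a, Sum.elim (fun i => (L i).getD a) y ∈ D} hL
    obtain ⟨i₀, hi₀⟩ := (hh₂ (fun _ => Classical.arbitrary κ)).1
    have ht₁ : Proper (fun i => (L i).elim (Sum.inr ()) (fun a => (Sum.inl a : κ ⊕ Unit))) :=
      fun _ => ⟨i₀, by simp [hi₀]⟩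
    refine ⟨_, ht₁.option ht₂, fun z => ?_⟩
    convert (hh₂ (fun e => z (some e))).2 (z none) using 1
    ext j
    rcases j with j | j
    · simp only [emb, Sum.elim_inl]
      rcases L j with _ | b <;> simp
    · simp only [emb, Sum.elim_inr]
      rcases t₂ j with b | b <;> simp

/-- insensitivity of a set of words under exchanging `none` and `some i` -/
def Insens {ι κ : Type} (i : κ) (F : Set (ι → Option κ)) : Prop :=
  ∀ x y : ι → Option κ, (∀ j, (x j).getD i = (y j).getD i) → x ∈ F → y ∈ F

lemma Insens.compl {ι κ : Type} {i : κ} {F : Set (ι → Option κ)} (h : Insens i F) :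
    Insens i Fᶜ := fun x y hxy hx hy => hx (h y x (fun j => (hxy j).symm) hy)

lemma Insens.emb {ι κ η : Type} {i : κ} {F : Set (ι → Option κ)} (h : Insens i F)
    (t : ι → Option κ ⊕ η) : Insens i {z | emb t z ∈ F} := by
  intro x y hxy hx
  refine h _ _ (fun j => ?_) hx
  simp only [DHJ.emb]
  rcases t j with a | a
  · rfl
  · exact hxy a

/-- composition of templates -/
def tcomp {ι α η ζ : Type} (t : ι → α ⊕ ζ) (t' : ζ → α ⊕ η) : ι → α ⊕ η :=
  fun j => Sum.elim Sum.inl t' (t j)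

lemma emb_tcomp {ι α η ζ : Type} (t : ι → α ⊕ ζ) (t' : ζ → α ⊕ η) (z : η → α) :
    emb (tcomp t t') z = emb t (emb t' z) := by
  ext j
  simp only [emb, tcomp]
  rcases t j with a | a <;> rfl

lemma Proper.tcomp {ι α η ζ : Type} {t : ι → α ⊕ ζ} {t' : ζ → α ⊕ η} (h : Proper t)
    (h' : Proper t') : Proper (tcomp t t') := by
  intro e
  obtain ⟨k, hk⟩ := h' e
  obtain ⟨j, hj⟩ := h k
  exact ⟨j, by simp [DHJ.tcomp, hj, hk]⟩

lemma Proper.emb_injective {ι α η : Type} {t : ι → α ⊕ η} (h : Proper t) :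
    Function.Injective (emb t) := by
  intro z z' hz
  ext e
  obtain ⟨j, hj⟩ := h e
  have := congrFun hz j
  simpa [emb, hj] using this

lemma avg_range {Z Ω : Type} [Finite Z] [Finite Ω] [Nonempty Z] (g : Z → Ω)
    (hg : Function.Injective g) (w : Ω → ℝ) :
    avg (fun x => ind (x ∈ Set.range g) * w x) =
      (Nat.card Z : ℝ) / Nat.card Ω * avg (fun z => w (g z)) := by
  classical
  have := Fintype.ofFinite Z
  have := Fintype.ofFinite Ω
  rw [avg_eq, avg_eq]
  have hZ : (Nat.card Z : ℝ) ≠ 0 := by exact_mod_cast Nat.card_pos.ne'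
  have : ∑ x, ind (x ∈ Set.range g) * w x = ∑ z, w (g z) := by
    rw [← Finset.sum_image (f := w) (s := univ) (g := g) (fun a _ b _ hab => hg hab)]
    rw [← Finset.sum_subset (subset_univ (image g univ))]
    · apply Finset.sum_congr rfl
      intro x hx
      rw [ind_true, one_mul]
      simpa using hx
    · intro x _ hx
      rw [ind_false, zero_mul]
      simpa using hx
  rw [this]
  field_simp

section insens
variable {κ : Type} [Finite κ] [Nonempty κ]

lemma insens_subspace (hκ : IsDHJ κ) (i : κ) (η : Type) [Finite η] (β : ℝ) (hβ : 0 < β) :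
    ∃ (ι : Type) (_ : Finite ι), ∀ G : Set (ι → Option κ), Insens i G →
      β ≤ avg (fun x => ind (x ∈ G)) → ∃ t : ι → Option κ ⊕ η, Proper t ∧ ∀ z, emb t z ∈ G := by
  obtain ⟨ζ, _, hζ⟩ := mdhj κ hκ η (β / 2) (by positivity)
  obtain ⟨ι, _, hι⟩ := split (Option κ) κ ζ (β / 2) (by positivity)
  refine ⟨ι, inferInstance, fun G hG hd => ?_⟩
  obtain ⟨t₁, ht₁, h₁⟩ := hι some (Option.some_injective κ) (fun x => ind (x ∈ G)) (fun x => ind_le_one _) (β / 2)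
    (by positivity) (by linarith)
  obtain ⟨t₂, ht₂, h₂⟩ := hζ {z | (fun j => Sum.elim id (fun e => some (z e)) (t₁ j)) ∈ G} h₁
  have hp : Proper (fun e => (t₂ e).map (some : κ → Option κ) id) := by
    intro e
    obtain ⟨j, hj⟩ := ht₂ e
    exact ⟨j, by simp [hj]⟩
  refine ⟨_, ht₁.tcomp hp, fun z => ?_⟩
  refine hG _ _ (fun j => ?_) (h₂ (fun e => (z e).getD i))
  simp only [emb, tcomp]
  rcases t₁ j with a | a
  · simp
  · simp only [Sum.elim_inr]
    rcases t₂ a with b | b <;> simp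

lemma insens_iter (i : κ) (η ι₁ : Type) [Finite η] [Finite ι₁] (β : ℝ) (hβ : 0 < β)
    (h₁ : ∀ G : Set (ι₁ → Option κ), Insens i G →
      β / 2 ≤ avg (fun x => ind (x ∈ G)) →
      ∃ t : ι₁ → Option κ ⊕ η, Proper t ∧ ∀ z, emb t z ∈ G)
    (c : ℝ) (hc : c = (Nat.card (η → Option κ) : ℝ) / Nat.card (ι₁ → Option κ) * (β / 2))
    (hc1 : c ≤ 1) (n : ℕ) :
    ∃ (ι : Type) (_ : Finite ι), ∀ w : (ι → Option κ) → ℝ, (∀ x, w x ≤ 1) →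
      ∀ F : Set (ι → Option κ), Insens i F →
      (∀ t : ι → Option κ ⊕ η, Proper t → avg (fun z => w (emb t z)) ≤ 0) →
      avg (fun x => ind (x ∈ F) * w x) ≤ β + (1 - c) ^ n * avg (fun x => ind (x ∈ F)) := by
  have hle : ∀ (ι : Type) [Finite ι] (w : (ι → Option κ) → ℝ), (∀ x, w x ≤ 1) →
      ∀ F : Set (ι → Option κ), avg (fun x => ind (x ∈ F) * w x) ≤ avg (fun x => ind (x ∈ F)) := by
    intro ι _ w hw F
    exact avg_mono fun x => mul_le_of_le_one_right (ind_nonneg _) (hw x)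
  induction n with
  | zero =>
    refine ⟨Empty, inferInstance, fun w hw F _ _ => ?_⟩
    have := hle _ w hw F
    simp only [pow_zero, one_mul]
    linarith
  | succ n ih =>
    obtain ⟨ι', _, ih⟩ := ih
    refine ⟨ι₁ ⊕ ι', inferInstance, fun w hw F hF ht => ?_⟩
    have hr : 0 ≤ 1 - c := by linarith
    by_cases hsmall : avg (fun x => ind (x ∈ F)) < β
    · have h1 := hle _ w hw F
      have h2 : 0 ≤ avg (fun x => ind (x ∈ F)) := avg_nonneg fun x => ind_nonneg _
      have : 0 ≤ (1 - c) ^ (n + 1) * avg (fun x => ind (x ∈ F)) := by positivity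
      linarith
    push Not at hsmall
    choose! τ hτ using h₁
    set Fs : (ι' → Option κ) → Set (ι₁ → Option κ) := fun y => {x | Sum.elim x y ∈ F} with hFs
    have hFsI : ∀ y, Insens i (Fs y) := by
      intro y x x' hx hxF
      refine hF _ _ (fun j => ?_) hxF
      rcases j with j | j
      · exact hx j
      · rfl
    have hFse : ∀ y y' : ι' → Option κ, (∀ j, (y j).getD i = (y' j).getD i) → Fs y = Fs y' := by
      intro y y' hy
      ext x
      constructor
      · refine hF _ _ (fun j => ?_)
        rcases j with j | j
        · rfl
        · exact hy j
      · refine hF _ _ (fun j => ?_)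
        rcases j with j | j
        · rfl
        · exact (hy j).symm
    set Y : Set (ι' → Option κ) := {y | β / 2 ≤ avg (fun x => ind (x ∈ Fs y))} with hY
    set R : (ι' → Option κ) → (ι₁ → Option κ) → Prop :=
      fun y x => y ∈ Y ∧ x ∈ Set.range (emb (τ (Fs y))) with hR
    have hRF : ∀ y x, R y x → Sum.elim x y ∈ F := by
      rintro y x ⟨hy, z, rfl⟩
      exact (hτ (Fs y) (hFsI y) hy).2 z
    set F' : (ι₁ → Option κ) → Set (ι' → Option κ) :=
      fun x => {y | Sum.elim x y ∈ F ∧ ¬ R y x} with hF'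
    have hF'I : ∀ x, Insens i (F' x) := by
      rintro x y y' hy ⟨hyF, hyR⟩
      have he := hFse y y' hy
      refine ⟨?_, ?_⟩
      · have : x ∈ Fs y' := he ▸ hyF
        exact this
      · intro hR'
        apply hyR
        simpa only [hR, hY, Set.mem_ofPred_eq, he] using hR'
    have hsplit : ∀ x y, ind (Sum.elim x y ∈ F) = ind (R y x) + ind (y ∈ F' x) := by
      intro x y
      by_cases h : R y x
      · rw [ind_true h, ind_true (hRF y x h), ind_false (fun h' => h'.2 h), add_zero]
      · rw [ind_false h, zero_add]
        congr 1
        simp [hF', h]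
    set c0 : ℝ := (Nat.card (η → Option κ) : ℝ) / Nat.card (ι₁ → Option κ) with hc0
    have hc0' : 0 ≤ c0 := by positivity
    -- the part covered by subspaces
    have hcov : ∀ (v : (ι₁ → Option κ) → ℝ) (y), avg (fun x => ind (R y x) * v x) =
        ind (y ∈ Y) * (c0 * (ind (y ∈ Y) * avg (fun z => v (emb (τ (Fs y)) z)))) := by
      intro v y
      by_cases hy : y ∈ Y
      · rw [ind_true hy, one_mul, one_mul, hc0,
          ← avg_range _ (hτ (Fs y) (hFsI y) hy).1.emb_injective]
        congr! 4 with x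
        simp [hR, hy]
      · rw [ind_false hy, zero_mul]
        have : (fun x => ind (R y x) * v x) = fun _ => 0 := by
          ext x
          rw [ind_false (fun h => hy h.1), zero_mul]
        rw [this, avg_const]
    have hA : avg (fun x => avg (fun y => ind (R y x) * w (Sum.elim x y))) ≤ 0 := by
      rw [avg_comm]
      apply avg_le
      intro y
      rw [hcov (fun x => w (Sum.elim x y)) y]
      by_cases hy : y ∈ Y
      · rw [ind_true hy, one_mul, one_mul]
        apply mul_nonpos_of_nonneg_of_nonpos hc0'
        have hp := (hτ (Fs y) (hFsI y) hy).1
        have := ht (Sum.elim (τ (Fs y)) (fun j => Sum.inl (y j))) (fun e => by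
          obtain ⟨j, hj⟩ := hp e
          exact ⟨Sum.inl j, hj⟩)
        refine le_of_eq_of_le ?_ this
        congr! with z
        ext j
        rcases j with j | j <;> rfl
      · rw [ind_false hy, zero_mul]
    have hYd : β / 2 ≤ avg (fun y => ind (y ∈ Y)) := by
      rw [avg_sumfn, avg_comm] at hsmall
      obtain ⟨_, h⟩ := pigeon (Λ := Unit) _ (fun y => avg_le fun x => ind_le_one _) hβ hsmall
        (fun _ y => y ∈ Y) (fun y hy => ⟨(), hy⟩)
      simpa using h
    have hRd : c ≤ avg (fun x => avg (fun y => ind (R y x))) := by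
      rw [avg_comm]
      have : ∀ y, avg (fun x => ind (R y x)) = c0 * ind (y ∈ Y) := by
        intro y
        have := hcov (fun _ => 1) y
        simp only [mul_one] at this
        rw [this, avg_const]
        by_cases hy : y ∈ Y
        · rw [ind_true hy]; ring
        · rw [ind_false hy]; ring
      simp only [this]
      rw [avg_mul, hc]
      gcongr
    have hB : ∀ x, avg (fun y => ind (y ∈ F' x) * w (Sum.elim x y)) ≤
        β + (1 - c) ^ n * avg (fun y => ind (y ∈ F' x)) := by
      intro x
      refine ih (fun y => w (Sum.elim x y)) (fun y => hw _) (F' x) (hF'I x) ?_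
      intro t htp
      have := ht (Sum.elim (fun j => Sum.inl (x j)) t) (fun e => by
          obtain ⟨j, hj⟩ := htp e
          exact ⟨Sum.inr j, hj⟩)
      refine le_of_eq_of_le ?_ this
      congr! with z
      ext j
      rcases j with j | j <;> rfl
    have hB' := avg_mono hB
    rw [avg_add, avg_const, avg_mul] at hB'
    have hdF : avg (fun x => ind (x ∈ F)) = avg (fun x => avg (fun y => ind (R y x))) +
        avg (fun x => avg (fun y => ind (y ∈ F' x))) := by
      rw [avg_sumfn]
      simp only [hsplit, avg_add]
    have hwF : avg (fun x => ind (x ∈ F) * w x) =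
        avg (fun x => avg (fun y => ind (R y x) * w (Sum.elim x y))) +
        avg (fun x => avg (fun y => ind (y ∈ F' x) * w (Sum.elim x y))) := by
      rw [avg_sumfn]
      simp only [hsplit, add_mul, avg_add]
    have hF1 : avg (fun x => ind (x ∈ F)) ≤ 1 := avg_le fun x => ind_le_one _
    have hF0 : 0 ≤ avg (fun x => ind (x ∈ F)) := avg_nonneg fun x => ind_nonneg _
    have hcpos : 0 ≤ c := by rw [hc]; positivity
    have hfin : avg (fun x => avg (fun y => ind (y ∈ F' x))) ≤
        (1 - c) * avg (fun x => ind (x ∈ F)) := by nlinarith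
    have := mul_le_mul_of_nonneg_left hfin (pow_nonneg hr n)
    rw [hwF, pow_succ, mul_assoc]
    linarith

/-- averages over one insensitive set are controlled by averages on subspaces -/
lemma insens_one (hκ : IsDHJ κ) (i : κ) (η : Type) [Finite η] (β : ℝ) (hβ : 0 < β) :
    ∃ (ι : Type) (_ : Finite ι), ∀ w : (ι → Option κ) → ℝ, (∀ x, w x ≤ 1) →
      ∀ F : Set (ι → Option κ), Insens i F → ∀ b : ℝ, 0 ≤ b →
      (∀ t : ι → Option κ ⊕ η, Proper t → avg (fun z => w (emb t z)) ≤ b) →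
      avg (fun x => ind (x ∈ F) * w x) ≤ b + β := by
  set β' := min (β / 2) 1 with hβ'
  have hβ'0 : 0 < β' := by positivity
  have hβ'1 : β' ≤ 1 := min_le_right _ _
  have hβ'2 : β' ≤ β / 2 := min_le_left _ _
  obtain ⟨ι₁, _, h₁⟩ := insens_subspace hκ i η (β' / 2) (by positivity)
  have hO : (0 : ℝ) < Nat.card (ι₁ → Option κ) := by exact_mod_cast Nat.card_pos
  have hO' : (0 : ℝ) < Nat.card (η → Option κ) := by exact_mod_cast Nat.card_pos
  set c := (Nat.card (η → Option κ) : ℝ) / Nat.card (ι₁ → Option κ) * (β' / 2) with hc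
  have hc0 : 0 < c := by positivity
  have hc1 : c ≤ 1 := by
    obtain ⟨t, ht, _⟩ := h₁ Set.univ (fun _ _ _ _ => trivial) (by
      simp only [Set.mem_univ, ind_true, avg_const]; linarith)
    have h2 : (Nat.card (η → Option κ) : ℝ) / Nat.card (ι₁ → Option κ) ≤ 1 := by
      rw [div_le_one hO]
      exact_mod_cast Nat.card_le_card_of_injective _ ht.emb_injective
    have h3 : 0 ≤ (Nat.card (η → Option κ) : ℝ) / Nat.card (ι₁ → Option κ) := by positivity
    nlinarith
  obtain ⟨n, hn⟩ := exists_pow_lt_of_lt_one (show 0 < β / 2 by positivity)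
      (show 1 - c < 1 by linarith)
  obtain ⟨ι, _, hι⟩ := insens_iter i η ι₁ β' hβ'0 h₁ c hc hc1 n
  refine ⟨ι, inferInstance, fun w hw F hF b hb ht => ?_⟩
  have key := hι (fun x => w x - b) (fun x => by linarith [hw x]) F hF (fun t htp => by
    rw [avg_sub, avg_const]
    linarith [ht t htp])
  have hF1 : avg (fun x => ind (x ∈ F)) ≤ 1 := avg_le fun x => ind_le_one _
  have hF0 : 0 ≤ avg (fun x => ind (x ∈ F)) := avg_nonneg fun x => ind_nonneg _
  have h4 : avg (fun x => ind (x ∈ F) * (w x - b)) =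
      avg (fun x => ind (x ∈ F) * w x) - b * avg (fun x => ind (x ∈ F)) := by
    rw [← avg_mul, ← avg_sub]
    congr! 2 with x
    ring
  rw [h4] at key
  have h5 : 0 ≤ (1 - c) ^ n := pow_nonneg (by linarith) n
  nlinarith

lemma insens_many (hκ : IsDHJ κ) (l : List κ) : ∀ (η : Type) [Finite η] (β : ℝ), 0 < β →
    ∃ (ι : Type) (_ : Finite ι), ∀ w : (ι → Option κ) → ℝ, (∀ x, w x ≤ 1) →
      ∀ F : κ → Set (ι → Option κ), (∀ i, Insens i (F i)) → ∀ b : ℝ, 0 ≤ b →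
      (∀ t : ι → Option κ ⊕ η, Proper t → avg (fun z => w (emb t z)) ≤ b) →
      avg (fun x => ind (∀ i ∈ l, x ∈ F i) * w x) ≤ b + β := by
  induction l with
  | nil =>
    intro η _ β hβ
    refine ⟨η, inferInstance, fun w hw F hF b hb ht => ?_⟩
    have := ht Sum.inr (fun e => ⟨e, rfl⟩)
    have h2 : (fun x => ind (∀ i ∈ ([] : List κ), x ∈ F i) * w x) = fun x => w (emb Sum.inr x) := by
      ext x
      rw [ind_true (by simp), one_mul]
      rfl
    rw [h2]
    linarith
  | cons i l ih =>
    intro η _ β hβ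
    obtain ⟨ζ, _, hζ⟩ := ih η (β / 2) (by positivity)
    obtain ⟨ι, _, hι⟩ := insens_one hκ i ζ (β / 2) (by positivity)
    refine ⟨ι, inferInstance, fun w hw F hF b hb ht => ?_⟩
    have := hι (fun x => ind (∀ i ∈ l, x ∈ F i) * w x) (fun x => by
        nlinarith [ind_nonneg (∀ i ∈ l, x ∈ F i), ind_le_one (∀ i ∈ l, x ∈ F i), hw x])
      (F i) (hF i) (b + β / 2) (by positivity) (fun t htp => by
        refine hζ (fun z => w (emb t z)) (fun z => hw _) (fun i => {z | emb t z ∈ F i})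
          (fun i => (hF i).emb t) b hb (fun t' ht' => ?_)
        simp only [← emb_tcomp]
        exact ht _ (htp.tcomp ht'))
    have h2 : (fun x => ind (∀ j ∈ i :: l, x ∈ F j) * w x) =
        fun x => ind (x ∈ F i) * (ind (∀ j ∈ l, x ∈ F j) * w x) := by
      ext x
      by_cases h1 : x ∈ F i
      · rw [ind_true h1, one_mul]
        congr 2
        simp [h1]
      · rw [ind_false h1, ind_false (by simp [h1]), zero_mul, zero_mul]
    rw [h2]
    linarith

end insens

lemma HasLine.of_emb {ι α η : Type} {t : ι → α ⊕ η} (ht : Proper t) {D : Set (ι → α)}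
    (h : HasLine {z | emb t z ∈ D}) : HasLine D := by
  obtain ⟨L, ⟨e, he⟩, hL⟩ := h
  obtain ⟨j, hj⟩ := ht e
  refine ⟨fun i => Sum.elim some L (t i), ⟨j, by simp [hj, he]⟩, fun a => ?_⟩
  have h' : emb t (fun i => (L i).getD a) ∈ D := hL a
  convert h' using 1
  ext i
  simp only [emb]
  rcases t i with b | b <;> simp

lemma slice_lower {Ω : Type} [Finite Ω] [Nonempty Ω] (f : Ω → ℝ) (d e : ℝ) (he : 0 ≤ e)
    (h1 : ∀ x, f x ≤ d + e) (h2 : d - e < avg f) (x : Ω) : d - 2 * Nat.card Ω * e ≤ f x := by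
  have := Fintype.ofFinite Ω
  have hN : (0 : ℝ) < Nat.card Ω := by exact_mod_cast Nat.card_pos
  rw [avg_eq, lt_div_iff₀ hN] at h2
  have h3 := Finset.single_le_sum (f := fun x => d + e - f x) (s := univ)
    (fun x _ => by linarith [h1 x]) (mem_univ x)
  simp only [Finset.sum_sub_distrib, Finset.sum_const, card_univ, nsmul_eq_mul] at h3
  rw [← Nat.card_eq_fintype_card] at h3
  nlinarith

/-- replace the letter `none` by `some i` -/
def rep {ι κ : Type} (i : κ) (x : ι → Option κ) : ι → Option κ := fun j => some ((x j).getD i)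

lemma step_contra {κ : Type} [Finite κ] [Nonempty κ] (hκ : IsDHJ κ) (d : ℝ) (hd : 0 < d)
    (hup : ∀ γ : ℝ, 0 < γ → ∃ (ι : Type) (_ : Finite ι), ∀ D : Set (ι → Option κ), ¬ HasLine D →
      avg (fun x => ind (x ∈ D)) ≤ d + γ)
    (hlow : ∀ γ : ℝ, 0 < γ → ∀ (ι : Type) [Finite ι], ∃ D : Set (ι → Option κ), ¬ HasLine D ∧
      d - γ < avg (fun x => ind (x ∈ D))) : False := by
  classical
  have := Fintype.ofFinite κ
  obtain ⟨M, _, hM⟩ := hκ (d / 4) (by positivity)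
  have := Fintype.ofFinite M
  set θ : ℝ := d / 2 / (2 * Fintype.card (M → Option κ)) with hθ
  have hθ0 : 0 < θ := by positivity
  set g : ℝ := d * θ / 8 with hg
  have hg0 : 0 < g := by positivity
  set K : ℝ := (Fintype.card (Set κ) : ℝ) with hK
  have hK0 : 0 < K := by rw [hK]; exact_mod_cast Fintype.card_pos
  obtain ⟨W₀, _, hW₀⟩ := hup g hg0
  obtain ⟨W, _, hW⟩ := insens_many hκ (univ : Finset κ).toList W₀ (g / K) (by positivity)
  obtain ⟨A', _, hA'⟩ := split (M ⊕ κ) (Option κ) W (θ / 2) (by positivity)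
  set e : ℝ := min g (d / 2) with he
  have he0 : 0 < e := by positivity
  set N : ℝ := (Nat.card (A' ⊕ M → Option κ) : ℝ) with hN
  have hN0 : 0 < N := by rw [hN]; exact_mod_cast Nat.card_pos
  obtain ⟨B, _, hB⟩ := hup (e / (2 * N)) (by positivity)
  obtain ⟨D, hD, hDd⟩ := hlow (e / (2 * N)) (by positivity) ((A' ⊕ M) ⊕ B)
  -- every slice is dense
  have hslice : ∀ x : A' ⊕ M → Option κ, d - e ≤ avg (fun y => ind (Sum.elim x y ∈ D)) := by
    intro x
    rw [avg_sumfn] at hDd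
    have := slice_lower _ d (e / (2 * N)) (by positivity) (fun x => ?_) hDd x
    · rw [← hN] at this
      have h2 : 2 * N * (e / (2 * N)) = e := by field_simp
      linarith
    · apply hB {y | Sum.elim x y ∈ D}
      intro hl
      apply hD
      refine HasLine.of_emb (t := Sum.elim (fun j => Sum.inl (x j)) Sum.inr)
        (fun j => ⟨Sum.inr j, rfl⟩) ?_
      convert hl using 4 with y
      ext j
      rcases j with j | j <;> rfl
  have hed : e ≤ d / 2 := min_le_right _ _
  have heg : e ≤ g := min_le_left _ _
  -- find the line type
  set xw : (A' → M ⊕ κ) → (M → Option κ) → (A' ⊕ M → Option κ) :=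
    fun U u => Sum.elim (fun a => Sum.elim u some (U a)) u with hxw
  have hword : ∀ U (L : M → Option κ) i, rep i (xw U L) = xw U (fun m => some ((L m).getD i)) := by
    intro U L i
    ext1 j
    rcases j with j | j
    · simp only [rep, hxw, Sum.elim_inl]
      rcases U j with a | a <;> simp
    · simp [rep, hxw]
  obtain ⟨u, hu⟩ := pigeon (Ω := (A' → M ⊕ κ) × (B → Option κ)) (Λ := M → Option κ)
    (fun p => avg (fun v : M → κ => ind (Sum.elim (xw p.1 (fun m => some (v m))) p.2 ∈ D)))
    (fun p => avg_le fun v => ind_le_one _) (c := d / 2) (by positivity)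
    (by
      rw [avg_prod]
      apply le_avg
      intro U
      rw [avg_comm]
      apply le_avg
      intro v
      have := hslice (xw U (fun m => some (v m)))
      try dsimp only
      linarith)
    (fun u p => (∃ m, u m = none) ∧ ∀ i, Sum.elim (rep i (xw p.1 u)) p.2 ∈ D)
    (fun p hp => by
      obtain ⟨L, hL1, hL2⟩ := hM {v | Sum.elim (xw p.1 (fun m => some (v m))) p.2 ∈ D}
        (by simp only [Set.mem_ofPred_eq]; linarith)
      refine ⟨L, hL1, fun i => ?_⟩
      rw [hword]
      exact hL2 i)
  rw [← hθ] at hu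
  have hunone : ∃ m, u m = none := by
    obtain ⟨p, hp⟩ := exists_le_of_le_avg hu
    by_contra hcon
    rw [ind_false (fun h => hcon h.1)] at hp
    linarith
  obtain ⟨m₀, hm₀⟩ := hunone
  rw [avg_prod] at hu
  set s : Option κ → M ⊕ κ := fun o => o.elim (Sum.inl m₀) Sum.inr with hs
  have hsinj : Function.Injective s := by
    intro a b hab
    rcases a with _ | a <;> rcases b with _ | b <;> simp [hs] at hab ⊢
    exact hab
  obtain ⟨t, ht, hth⟩ := hA' s hsinj _ (fun U => avg_le fun y => ind_le_one _) (θ / 2)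
    (by positivity) (by rw [add_halves]; exact hu)
  set tV : A' ⊕ M → Option κ ⊕ W :=
    Sum.elim (fun a => (t a).map (Sum.elim u some) id) (fun m => Sum.inl (u m)) with htV
  have hV : ∀ z, xw (fun j => Sum.elim id (fun e => s (z e)) (t j)) u = emb tV z := by
    intro z
    ext1 j
    rcases j with j | j
    · simp only [hxw, emb, htV, Sum.elim_inl]
      rcases t j with a | a
      · simp
      · simp only [Sum.elim_inr, Sum.map_inr, id]
        rcases z a with _ | b <;> simp [hs, hm₀]
    · simp [hxw, emb, htV]
  simp only [hV] at hth
  have htVp : Proper tV := by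
    intro w
    obtain ⟨j, hj⟩ := ht w
    exact ⟨Sum.inl j, by simp [htV, hj]⟩
  set E : (B → Option κ) → κ → Set (W → Option κ) :=
    fun y i => {z | Sum.elim (rep i (emb tV z)) y ∈ D} with hE
  have hEI : ∀ y i, Insens i (E y i) := by
    intro y i z z' hz hzE
    have : rep i (emb tV z) = rep i (emb tV z') := by
      ext1 j
      simp only [rep, emb]
      rcases tV j with a | a
      · rfl
      · simp only [Sum.elim_inr, hz a]
    simp only [hE, Set.mem_ofPred_eq] at hzE ⊢
    rwa [← this]
  have hdisj : ∀ y z, Sum.elim (emb tV z) y ∈ D → ¬ ∀ i, z ∈ E y i := by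
    intro y z hz hzE
    apply hD
    refine ⟨Sum.elim (fun j => (emb tV z j).elim none (fun b => some (some b)))
      (fun j => some (y j)), ⟨Sum.inl (Sum.inr m₀), by simp [emb, htV, hm₀]⟩, fun a => ?_⟩
    rcases a with _ | i
    · convert hz using 1
      ext1 j
      rcases j with j | j
      · simp only [Sum.elim_inl]
        rcases emb tV z j with _ | b <;> simp
      · simp
    · convert (show Sum.elim (rep i (emb tV z)) y ∈ D from hzE i) using 1
      ext1 j
      rcases j with j | j
      · simp only [Sum.elim_inl, rep]
        rcases emb tV z j with _ | b <;> simp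
      · simp
  -- correlation for a fixed y
  have hcor : ∀ y : B → Option κ, avg (fun z => ind (Sum.elim (emb tV z) y ∈ D)) - (d + g) +
      (d + g) * avg (fun z => ind (∀ i, z ∈ E y i)) ≤ g := by
    intro y
    set w : (W → Option κ) → ℝ := fun z => ind (Sum.elim (emb tV z) y ∈ D) - (d + g) with hw
    set F : Set κ → κ → Set (W → Option κ) := fun P i => {z | z ∈ E y i ↔ i ∈ P} with hF
    have hFI : ∀ P i, Insens i (F P i) := by
      intro P i
      by_cases hi : i ∈ P
      · have : F P i = E y i := by ext z; simp [hF, hi]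
        rw [this]; exact hEI y i
      · have : F P i = (E y i)ᶜ := by ext z; simp [hF, hi]
        rw [this]; exact (hEI y i).compl
    have hbd : ∀ P, avg (fun z => ind (∀ i ∈ (univ : Finset κ).toList, z ∈ F P i) * w z)
        ≤ g / K := by
      intro P
      have := hW w (fun z => by
        have := ind_le_one (Sum.elim (emb tV z) y ∈ D)
        simp only [hw]; linarith) (F P) (hFI P) 0 le_rfl (fun t' ht' => by
          simp only [hw]
          rw [avg_sub, avg_const, sub_nonpos]
          apply hW₀ {z | Sum.elim (emb tV (emb t' z)) y ∈ D}
          intro hl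
          apply hD
          refine HasLine.of_emb (t := Sum.elim (tcomp tV t') (fun j => Sum.inl (y j))) ?_ ?_
          · intro e
            obtain ⟨j, hj⟩ := htVp.tcomp ht' e
            exact ⟨Sum.inl j, hj⟩
          · convert hl using 4 with z
            rw [← emb_tcomp]
            ext j
            rcases j with j | j <;> rfl)
      linarith
    have hdec : ∀ z, ind (Sum.elim (emb tV z) y ∈ D) - (d + g) + (d + g) * ind (∀ i, z ∈ E y i) =
        ∑ P ∈ (univ : Finset (Set κ)).filter (· ≠ Set.univ),
          ind (∀ i ∈ (univ : Finset κ).toList, z ∈ F P i) * w z := by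
      intro z
      have h1 : ∀ P, ind (∀ i ∈ (univ : Finset κ).toList, z ∈ F P i) =
          if P = {i | z ∈ E y i} then 1 else 0 := by
        intro P
        unfold ind
        congr 1
        simp only [Finset.mem_toList, Finset.mem_univ, true_imp_iff, hF, Set.mem_ofPred_eq,
          eq_iff_iff]
        rw [Set.ext_iff]
        simp only [Set.mem_ofPred_eq]
        exact forall_congr' fun i => Iff.comm
      simp only [h1, ite_mul, one_mul, zero_mul]
      rw [Finset.sum_ite_eq']
      by_cases hz : ∀ i, z ∈ E y i
      · have h2 : {i | z ∈ E y i} = Set.univ := by ext i; simp [hz i]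
        rw [ind_true hz, ind_false (fun h => hdisj y z h hz), if_neg (by simp [h2])]
        ring
      · have h2 : {i | z ∈ E y i} ≠ Set.univ := by
          intro h
          apply hz
          intro i
          have : i ∈ {i | z ∈ E y i} := h ▸ Set.mem_univ i
          exact this
        rw [ind_false hz, if_pos (by simp only [Finset.mem_filter, Finset.mem_univ, true_and]; exact h2)]
        ring
    calc _ = avg (fun z => ind (Sum.elim (emb tV z) y ∈ D) - (d + g) +
          (d + g) * ind (∀ i, z ∈ E y i)) := by
          rw [avg_add, avg_sub, avg_const, avg_mul]
      _ = ∑ P ∈ (univ : Finset (Set κ)).filter (· ≠ Set.univ),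
          avg (fun z => ind (∀ i ∈ (univ : Finset κ).toList, z ∈ F P i) * w z) := by
          rw [← avg_sum]
          congr! 2 with z
          exact hdec z
      _ ≤ ∑ P ∈ (univ : Finset (Set κ)).filter (· ≠ Set.univ), g / K :=
          Finset.sum_le_sum fun P _ => hbd P
      _ ≤ ∑ P : Set κ, g / K :=
          Finset.sum_le_sum_of_subset_of_nonneg (Finset.filter_subset _ _)
            (fun _ _ _ => by positivity)
      _ = g := by
          rw [Finset.sum_const, card_univ, nsmul_eq_mul, ← hK]
          field_simp
  have hall := avg_le hcor
  rw [avg_add, avg_sub, avg_const, avg_mul] at hall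
  have hlow1 : d - e ≤ avg (fun y => avg (fun z => ind (Sum.elim (emb tV z) y ∈ D))) := by
    rw [avg_comm]
    exact le_avg fun z => hslice _
  have hlow2 : θ / 2 ≤ avg (fun y => avg (fun z => ind (∀ i, z ∈ E y i))) := by
    rw [avg_comm]
    refine hth.trans (avg_mono fun z => avg_mono fun y => ?_)
    by_cases h : ∀ i, z ∈ E y i
    · rw [ind_true h]; exact ind_le_one _
    · rw [ind_false (fun h' => h h'.2)]; exact ind_nonneg _
  nlinarith

lemma dhj_option {κ : Type} [Finite κ] (hκ : IsDHJ κ) : IsDHJ (Option κ) := by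
  intro c hc
  rcases isEmpty_or_nonempty κ with hE | hE
  · refine ⟨Unit, inferInstance, fun D hD => ?_⟩
    obtain ⟨x, hx⟩ := exists_le_of_le_avg hD
    refine ⟨fun _ => none, ⟨(), rfl⟩, fun a => ?_⟩
    have hxD : x ∈ D := by
      by_contra h
      rw [ind_false h] at hx
      linarith
    convert hxD using 1
    exact Subsingleton.elim _ _
  set S : Set ℝ := {b | ∃ (ι : Type) (_ : Finite ι), ∀ D : Set (ι → Option κ), ¬ HasLine D →
    avg (fun x => ind (x ∈ D)) ≤ b} with hS
  have hS1 : (1 : ℝ) ∈ S := ⟨Unit, inferInstance, fun D _ => avg_le fun x => ind_le_one _⟩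
  have hS0 : ∀ b ∈ S, 0 ≤ b := by
    rintro b ⟨ι, _, h⟩
    have := h ∅ (by rintro ⟨L, _, hL⟩; exact hL none)
    exact le_trans (avg_nonneg fun x => ind_nonneg _) this
  have hbdd : BddBelow S := ⟨0, hS0⟩
  have hup : ∀ γ : ℝ, 0 < γ → ∃ (ι : Type) (_ : Finite ι), ∀ D : Set (ι → Option κ), ¬ HasLine D →
      avg (fun x => ind (x ∈ D)) ≤ sInf S + γ := by
    intro γ hγ
    obtain ⟨b, ⟨ι, _, hb⟩, hlt⟩ := exists_lt_of_csInf_lt ⟨1, hS1⟩ (show sInf S < sInf S + γ by linarith)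
    exact ⟨ι, inferInstance, fun D hD => (hb D hD).trans hlt.le⟩
  have hlow : ∀ γ : ℝ, 0 < γ → ∀ (ι : Type) [Finite ι], ∃ D : Set (ι → Option κ), ¬ HasLine D ∧
      sInf S - γ < avg (fun x => ind (x ∈ D)) := by
    intro γ hγ ι _
    by_contra hcon
    push Not at hcon
    have : sInf S ≤ sInf S - γ := csInf_le hbdd ⟨ι, inferInstance, hcon⟩
    linarith
  by_cases hd : 0 < sInf S
  · exact (step_contra hκ _ hd hup hlow).elim
  · obtain ⟨ι, _, h⟩ := hup (c / 2) (by positivity)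
    refine ⟨ι, inferInstance, fun D hD => ?_⟩
    by_contra hcon
    have := h D hcon
    linarith

theorem dhj (κ : Type) [hκ : Finite κ] : IsDHJ κ := by
  induction κ, hκ using fin_ind with
  | of_equiv κ κ' e ih =>
    intro c hc
    obtain ⟨ι, _, h⟩ := ih c hc
    refine ⟨ι, inferInstance, fun D hD => ?_⟩
    rw [← avg_equiv (Equiv.arrowCongr (Equiv.refl ι) e)] at hD
    obtain ⟨L, ⟨j, hj⟩, hL⟩ := h {x | (Equiv.arrowCongr (Equiv.refl ι) e) x ∈ D} hD
    refine ⟨fun i => (L i).map e, ⟨j, by simp [hj]⟩, fun a => ?_⟩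
    have h' : (Equiv.arrowCongr (Equiv.refl ι) e) (fun i => (L i).getD (e.symm a)) ∈ D :=
      hL (e.symm a)
    convert h' using 1
    ext1 i
    simp only [Equiv.arrowCongr_apply, Equiv.refl_symm, Function.comp]
    simp only [Equiv.coe_refl, id]
    rcases L i with _ | b <;> simp
  | h_empty =>
    intro c hc
    exact ⟨Unit, inferInstance, fun D _ => ⟨fun _ => none, ⟨(), rfl⟩, fun a => a.elim⟩⟩
  | h_option κ ih => exact dhj_option ih

lemma avg_ind_finset {G : Type} [Fintype G] (X : Finset G) :
    avg (fun a => ind (a ∈ X)) = (X.card : ℝ) / Nat.card G := by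
  classical
  rw [avg_eq]
  congr 1
  have : ∀ a, ind (a ∈ X) = if a ∈ X then 1 else 0 := by
    intro a
    by_cases h : a ∈ X <;> simp [ind, h]
  simp [this]

/-- the homomorphism given by an integer matrix -/
def matHom {k m : ℕ} (A : Matrix (Fin k) (Fin m) ℤ) (G : Type) [AddCommGroup G] :
    (Fin m → G) →+ (Fin k → G) where
  toFun x := fun r => ∑ j, A r j • x j
  map_zero' := by ext r; simp
  map_add' x y := by ext r; simp [smul_add, Finset.sum_add_distrib]

lemma card_ker_ge {k m : ℕ} (hkm : k ≤ m) (A : Matrix (Fin k) (Fin m) ℤ) (G : Type)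
    [AddCommGroup G] [Fintype G] :
    Fintype.card G ^ (m - k) ≤ Nat.card (matHom A G).ker := by
  have h1 := AddSubgroup.card_eq_card_quotient_mul_card_addSubgroup (matHom A G).ker
  have h2 : Nat.card ((Fin m → G) ⧸ (matHom A G).ker) ≤ Fintype.card G ^ k := by
    rw [Nat.card_congr (QuotientAddGroup.quotientKerEquivRange (matHom A G)).toEquiv]
    calc _ ≤ Nat.card (Fin k → G) :=
          Nat.card_le_card_of_injective _ Subtype.val_injective
      _ = _ := by simp
  have h3 : Nat.card (Fin m → G) = Fintype.card G ^ k * Fintype.card G ^ (m - k) := by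
    rw [← pow_add, Nat.add_sub_cancel' hkm]; simp
  have hpos : 0 < Fintype.card G ^ k := by
    have : 0 < Fintype.card G := Fintype.card_pos
    positivity
  have h4 : Fintype.card G ^ k * Fintype.card G ^ (m - k) ≤
      Fintype.card G ^ k * Nat.card (matHom A G).ker := by
    rw [← h3, h1]
    exact Nat.mul_le_mul_right _ h2
  exact Nat.le_of_mul_le_mul_left h4 hpos

lemma avg_translate {H V : Type} [AddCommGroup H] [AddCommGroup V] [Finite H] [Finite V]
    (Φ : V → H) (s : H → V) (hΦ : ∀ v h, Φ (v + s h) = Φ v + h) (f : H → ℝ) :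
    avg (fun v => f (Φ v)) = avg f := by
  have h1 : ∀ h : H, avg (fun v => f (Φ v)) = avg (fun v => f (Φ v + h)) := by
    intro h
    rw [← avg_equiv (Equiv.addRight (s h))]
    simp [hΦ]
  rw [← avg_const (Ω := H) (avg (fun v => f (Φ v)))]
  rw [show (fun _ : H => avg (fun v => f (Φ v))) = fun h => avg (fun v => f (Φ v + h)) from
    funext h1, avg_comm]
  rw [← avg_const (Ω := V) (avg f)]
  congr 1
  ext v
  exact avg_equiv (Equiv.addLeft (Φ v)) f

end DHJ

open DHJ
/-- let `A` be a `k × m` integer matrix whose columns sum to zero (the strong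
column condition) and with `d_k(A) = 1`. For every `ε > 0` there is `δ > 0` such that for
every sufficiently large finite abelian group `G` and every `X ⊆ G` with `|X| ≥ ε|G|`, the
system `Ax = 0` has at least `δ·|G|^{m−k}` solutions `x ∈ X^m`. -/
theorem stmt12 (k m : ℕ) (hkm : k ≤ m) (A : Matrix (Fin k) (Fin m) ℤ)
    (hsum : ∀ r : Fin k, ∑ j : Fin m, A r j = 0) (hdet : detGcd A = 1) :
    ∀ ε : ℝ, 0 < ε → ∃ δ : ℝ, 0 < δ ∧ ∃ n₀ : ℕ,
      ∀ (G : Type) [AddCommGroup G] [Fintype G], n₀ ≤ Fintype.card G →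
        ∀ X : Finset G, ε * Fintype.card G ≤ X.card →
          δ * (Fintype.card G : ℝ) ^ (m - k) ≤
            Nat.card {x : Fin m → G //
              (∀ i, x i ∈ X) ∧ ∀ r : Fin k, ∑ j : Fin m, A r j • x j = 0} := by
  classical
  intro ε hε
  rcases Nat.eq_zero_or_pos m with hm | hm
  · subst hm
    refine ⟨1, one_pos, 0, fun G _ _ _ X _ => ?_⟩
    have : Nonempty {x : Fin 0 → G //
              (∀ i, x i ∈ X) ∧ ∀ r : Fin k, ∑ j : Fin 0, A r j • x j = 0} :=
      ⟨⟨Fin.elim0, fun i => i.elim0, fun r => by simp⟩⟩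
    have h1 : 1 ≤ Nat.card {x : Fin 0 → G //
              (∀ i, x i ∈ X) ∧ ∀ r : Fin k, ∑ j : Fin 0, A r j • x j = 0} := Nat.card_pos
    simp only [Nat.zero_sub, pow_zero, mul_one]
    exact_mod_cast h1
  have : Nonempty (Fin m) := ⟨⟨0, hm⟩⟩
  obtain ⟨ι, _, hι⟩ := dhj (Fin m) (ε / 2) (by positivity)
  have := Fintype.ofFinite ι
  refine ⟨ε / (2 * Fintype.card (ι → Option (Fin m))), by positivity, 0,
    fun G _ _ _ X hX => ?_⟩
  set H := (matHom A G).ker with hH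
  have hmem : ∀ x : Fin m → G, x ∈ H ↔ ∀ r, ∑ j, A r j • x j = 0 := by
    intro x
    rw [hH, AddMonoidHom.mem_ker]
    exact funext_iff
  have hG0 : (0 : ℝ) < Nat.card G := by exact_mod_cast Nat.card_pos
  have hdX : ε ≤ avg (fun a => ind (a ∈ X)) := by
    rw [avg_ind_finset, le_div_iff₀ hG0, Nat.card_eq_fintype_card]
    exact hX
  obtain ⟨L, hL⟩ := pigeon (Ω := G × (ι → H)) (Λ := ι → Option (Fin m))
    (fun p => avg (fun w : ι → Fin m => ind (p.1 + ∑ i, (p.2 i : Fin m → G) (w i) ∈ X)))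
    (fun p => avg_le fun w => ind_le_one _) hε
    (by
      rw [avg_prod, avg_comm]
      apply le_avg
      intro b
      rw [avg_comm]
      apply le_avg
      intro w
      rw [← avg_equiv (Equiv.addRight (∑ i, (b i : Fin m → G) (w i)))] at hdX
      exact hdX)
    (fun L p => (∃ i, L i = none) ∧
      ∀ a, p.1 + ∑ i, (p.2 i : Fin m → G) ((L i).getD a) ∈ X)
    (fun p hp => hι {w | p.1 + ∑ i, (p.2 i : Fin m → G) (w i) ∈ X} hp)
  set δ := ε / (2 * Fintype.card (ι → Option (Fin m))) with hδ
  have hδ0 : 0 < δ := by positivity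
  have hLn : ∃ i, L i = none := by
    obtain ⟨p, hp⟩ := exists_le_of_le_avg hL
    by_contra hcon
    rw [ind_false (fun h => hcon h.1)] at hp
    linarith
  obtain ⟨i₀, hi₀⟩ := hLn
  -- the points of the line form a solution
  have hsol : ∀ p : G × (ι → H),
      (fun j => p.1 + ∑ i, (p.2 i : Fin m → G) ((L i).getD j)) ∈ H := by
    intro p
    have h1 : (fun j => p.1 + ∑ i, (p.2 i : Fin m → G) ((L i).getD j)) =
        (fun _ : Fin m => p.1) + ∑ i, fun j => (p.2 i : Fin m → G) ((L i).getD j) := by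
      ext j; simp
    have hconst : ∀ a : G, (fun _ : Fin m => a) ∈ H := by
      intro a
      rw [hmem]
      intro r
      rw [← Finset.sum_smul, hsum, zero_smul]
    rw [h1]
    refine H.add_mem (hconst _) (H.sum_mem fun i _ => ?_)
    rcases L i with _ | b
    · exact (p.2 i).2
    · exact hconst ((p.2 i : Fin m → G) b)
  have hav := avg_translate (V := G × (ι → H)) (H := H) (fun p => ⟨_, hsol p⟩)
    (fun h => (0, Pi.single i₀ h)) (by
      rintro ⟨a, b⟩ h
      ext j
      simp only [Prod.mk_add_mk, Pi.add_apply, AddSubgroup.coe_add, add_zero,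
        Finset.sum_add_distrib, ← add_assoc]
      congr 1
      rw [Finset.sum_eq_single i₀]
      · simp [hi₀]
      · intro i _ hi
        simp [Pi.single_eq_of_ne hi]
      · simp) (fun h => ind (∀ j, (h : Fin m → G) j ∈ X))
  have hge : δ ≤ avg (fun h : H => ind (∀ j, (h : Fin m → G) j ∈ X)) := by
    rw [← hav]
    refine hL.trans (avg_mono fun p => ?_)
    by_cases h : ∀ a, p.1 + ∑ i, (p.2 i : Fin m → G) ((L i).getD a) ∈ X
    · rw [ind_true (p := ∀ j, _) h]; exact ind_le_one _
    · rw [ind_false (fun h' => h h'.2)]; exact ind_nonneg _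
  have := Fintype.ofFinite H
  have hH0 : (0 : ℝ) < Nat.card H := by exact_mod_cast Nat.card_pos
  have hset : (fun h : H => ind (∀ j, (h : Fin m → G) j ∈ X)) =
      fun h => ind (h ∈ (univ : Finset H).filter (fun h : H => ∀ j, (h : Fin m → G) j ∈ X)) := by
    ext h
    simp
  rw [hset, avg_ind_finset, le_div_iff₀ hH0] at hge
  have hcard : ((univ : Finset H).filter (fun h : H => ∀ j, (h : Fin m → G) j ∈ X)).card ≤
      Nat.card {x : Fin m → G //
        (∀ i, x i ∈ X) ∧ ∀ r : Fin k, ∑ j : Fin m, A r j • x j = 0} := by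
    rw [← Fintype.card_coe, ← Nat.card_eq_fintype_card]
    refine Nat.card_le_card_of_injective (fun h => ⟨h.1.1, ?_, ?_⟩) ?_
    · exact (Finset.mem_filter.mp h.2).2
    · exact (hmem _).1 h.1.2
    · intro a b hab
      have := congrArg Subtype.val hab
      exact Subtype.ext (Subtype.ext this)
  have hk := card_ker_ge hkm A G
  calc δ * (Fintype.card G : ℝ) ^ (m - k) ≤ δ * Nat.card H := by
        gcongr
        exact_mod_cast hk
    _ ≤ _ := hge
    _ ≤ _ := by exact_mod_cast hcard
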